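/- Let Γ=(G,𝒞) be a countable graph with finite conditions, G=(V,E), 𝒞=(m_x,n_x)_{x∈V}, such that m_x = n_x = 0 for every vertex x of infinite degree. Then there exists a countable graph H=(W,F) such that: (i) if 𝓘(G) = ∅ then 𝓘(H) = ∅; and (ii) if H admits an unfriendly partition then Γ admits an unfriendly partition. -/

import Mathlib

open Cardinal

universe u

/-- `𝓘(G)`: the largest subset `W` of the vertex set such that each element of `W` has
infinitely many neighbours in `W` (the union of all such subsets). -/
def calI {V : Type u} (G : SimpleGraph V) : Set V :=
  ⋃₀ {W : Set V | ∀ x ∈ W, (G.neighborSet x ∩ W).Infinite}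

/-- `π` is an unfriendly partition of `G`. -/
def UnfriendlyPartition {V : Type u} (G : SimpleGraph V) (π : V → Fin 2) : Prop :=
  ∀ x : V, #{y : V // G.Adj x y ∧ π y = π x} ≤ #{y : V // G.Adj x y ∧ π y ≠ π x}

/-- `π` is an unfriendly partition of the graph with conditions `(G, C)`. -/
def CondUnfriendly {V : Type u} (G : SimpleGraph V) (C : V → Cardinal.{u} × Cardinal.{u})
    (π : V → Fin 2) : Prop :=
  ∀ x : V,
    (π x = 0 →
      (C x).1 + #{y : V // G.Adj x y ∧ π y = 0} ≤ (C x).2 + #{y : V // G.Adj x y ∧ π y = 1}) ∧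
    (π x = 1 →
      (C x).2 + #{y : V // G.Adj x y ∧ π y = 1} ≤ (C x).1 + #{y : V // G.Adj x y ∧ π y = 0})

/-!
A vertex `x` with condition `(m, n)` wants `m` additional neighbours of colour `0` and `n` of colour
`1`. They are supplied by a locally finite *ladder* whose unfriendly partitions are rigid: layers
are finite and consecutive layers are completely joined. Interior vertices of one layer have the
same neighbourhood, and it has odd size, so an unfriendly partition gives them the same colour (two
different colours would both be allowed only at an exact tie). The layers grow so fast that the
interior of layer `n + 1` outweighs everything else in the neighbourhood of a vertex of layer `n`,
which must therefore take the opposite colour. So the layers alternate, and up to exchanging the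
two colours the colour of a ladder vertex is the parity of its layer. Leaving one *port* per layer,
each to be joined to at most one vertex of `G`, does not disturb this, and there are enough ports of
both parities for the conditions of all vertices. As ladder vertices keep finite degree, they
contribute nothing to `𝓘`.
-/

theorem fin_two_eq_of_ne_of_ne {a b c : Fin 2} (hac : a ≠ c) (hbc : b ≠ c) : a = b := by
  omega

theorem fin_two_eq_add_one_of_ne {a b : Fin 2} (h : a ≠ b) : b = a + 1 := by
  omega

namespace UnfriendlyPartition

variable {V : Type*} {G : SimpleGraph V} {σ : V → Fin 2}

theorem two_mul_ncard_inter_le (h : UnfriendlyPartition G σ) {x : V}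
    (hfin : (G.neighborSet x).Finite) :
    2 * (G.neighborSet x ∩ {y | σ y = σ x}).ncard ≤ (G.neighborSet x).ncard := by
  have hle : (G.neighborSet x ∩ {y | σ y = σ x}).ncard ≤
      (G.neighborSet x \ {y | σ y = σ x}).ncard :=
    Cardinal.toNat_le_toNat (h x) (lt_aleph0_iff_set_finite.2 hfin.sdiff)
  have hadd := Set.ncard_inter_add_ncard_sdiff_eq_ncard (G.neighborSet x) {y | σ y = σ x} hfin
  omega

theorem ne_of_ncard_lt_two_mul (h : UnfriendlyPartition G σ) {x : V}
    (hfin : (G.neighborSet x).Finite) {S : Set V} {c : Fin 2} (hS : S ⊆ G.neighborSet x)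
    (hc : ∀ y ∈ S, σ y = c) (hcard : (G.neighborSet x).ncard < 2 * S.ncard) : σ x ≠ c := by
  rintro rfl
  have hle : S.ncard ≤ (G.neighborSet x ∩ {y | σ y = σ x}).ncard :=
    Set.ncard_le_ncard (Set.subset_inter hS hc) (hfin.inter_of_left _)
  have := h.two_mul_ncard_inter_le hfin
  omega

theorem eq_of_neighborSet_eq (h : UnfriendlyPartition G σ) {x y : V}
    (hfin : (G.neighborSet x).Finite) (hodd : Odd (G.neighborSet x).ncard)
    (hxy : G.neighborSet y = G.neighborSet x) : σ y = σ x := by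
  by_contra hne
  have hx := h.two_mul_ncard_inter_le hfin
  have hy := h.two_mul_ncard_inter_le (hxy ▸ hfin)
  have hcompl : {z | σ z = σ y} = {z | σ z = σ x}ᶜ :=
    Set.ext fun z =>
      ⟨fun hz hz' => hne (hz.symm.trans hz'), fun hz => fin_two_eq_of_ne_of_ne hz hne⟩
  have hadd := Set.ncard_inter_add_ncard_sdiff_eq_ncard (G.neighborSet x) {z | σ z = σ x} hfin
  rw [hxy, hcompl, ← Set.sdiff_eq] at hy
  obtain ⟨k, hk⟩ := hodd
  omega

theorem sub_const (h : UnfriendlyPartition G σ) (c : Fin 2) :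
    UnfriendlyPartition G (fun x => σ x - c) := by
  simpa only [UnfriendlyPartition, ne_eq, sub_left_inj] using h

end UnfriendlyPartition

section Glue

variable {V L : Type*} {G : SimpleGraph V} {K : SimpleGraph L} {R : V → L → Prop}

/-- The disjoint union of `G` and `K` together with the edges between `V` and `L` prescribed by
the relation `R`. It is used to supply the vertices of `G` with extra neighbours in `L`. -/
def glue (G : SimpleGraph V) (K : SimpleGraph L) (R : V → L → Prop) :
    SimpleGraph (V ⊕ L) where
  Adj
    | .inl x, .inl y => G.Adj x y
    | .inl x, .inr p => R x p
    | .inr p, .inl x => R x p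
    | .inr p, .inr q => K.Adj p q
  symm := ⟨by
    rintro (x | p) (y | q) h
    exacts [SimpleGraph.Adj.symm h, h, h, SimpleGraph.Adj.symm h]⟩
  loopless := ⟨by
    rintro (x | p) h
    exacts [G.irrefl h, K.irrefl h]⟩

theorem neighborSet_glue_inr (p : L) :
    (glue G K R).neighborSet (.inr p) = .inr '' K.neighborSet p ∪ .inl '' {x | R x p} := by
  ext (x | q) <;> simp [glue]

theorem calI_glue_subset (hfin : ∀ p, ((glue G K R).neighborSet (.inr p)).Finite) :
    calI (glue G K R) ⊆ .inl '' calI G := by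
  rintro w ⟨S, hS, hw⟩
  have hinr (p : L) : .inr p ∉ S := fun hp => hS _ hp ((hfin p).inter_of_left _)
  obtain x | p := w
  · refine ⟨x, ⟨Sum.inl ⁻¹' S, fun y hy hy_fin => hS _ hy ?_, hw⟩, rfl⟩
    refine (hy_fin.image .inl).subset ?_
    rintro (z | q) ⟨hyz, hz⟩
    · exact ⟨z, ⟨hyz, hz⟩, rfl⟩
    · exact (hinr q hz).elim
  · exact (hinr p hw).elim

end Glue

section GlueCardinal

variable {V L : Type u} {G : SimpleGraph V} {K : SimpleGraph L} {R : V → L → Prop}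

theorem mk_glue_adj_inl (x : V) (P : V ⊕ L → Prop) :
    #{y // (glue G K R).Adj (.inl x) y ∧ P y} =
      #{p // R x p ∧ P (.inr p)} + #{y // G.Adj x y ∧ P (.inl y)} := by
  rw [mk_congr Equiv.subtypeSum, mk_sum, lift_id, lift_id, add_comm]
  rfl

theorem UnfriendlyPartition.condUnfriendly_comp_inl {σ : V ⊕ L → Fin 2}
    (h : UnfriendlyPartition (glue G K R) σ) :
    CondUnfriendly G
      (fun x => (#{p // R x p ∧ σ (.inr p) = 0}, #{p // R x p ∧ σ (.inr p) = 1}))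
      (fun x => σ (.inl x)) := by
  have ne_zero_iff (a : Fin 2) : a ≠ 0 ↔ a = 1 := by omega
  have ne_one_iff (a : Fin 2) : a ≠ 1 ↔ a = 0 := by omega
  refine fun x => ⟨fun hx => ?_, fun hx => ?_⟩ <;>
  · have hx' : σ (.inl x) = _ := hx
    simpa only [hx', ne_zero_iff, ne_one_iff, mk_glue_adj_inl] using h (.inl x)

end GlueCardinal

/-- The number of vertices in the `n`-th layer of the ladder. The step `5` between layers of the
same parity is odd, so that the vertices of the ladder have odd degree, and it exceeds `3`, so that
a layer minus one vertex holds the majority in the neighbourhood of a vertex one layer below, even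
after that vertex has received one more neighbour. -/
def layerSize (n : ℕ) : ℕ := 5 * (n / 2 + 1)

theorem one_lt_layerSize (n : ℕ) : 1 < layerSize n := by
  unfold layerSize
  omega

/-- The vertices of the ladder, arranged in layers of `layerSize n` vertices. In each layer the
vertex of index `0` is the only one that is to be joined to a vertex outside of the ladder. -/
@[ext]
structure LadderVertex : Type u where
  level : ℕ
  index : ℕ
  index_lt : index < layerSize level

/-- The graph in which consecutive layers are completely joined. -/
def ladder : SimpleGraph LadderVertex.{u} where
  Adj p q := q.level = p.level + 1 ∨ q.level + 1 = p.level
  symm := ⟨fun _ _ h => by omega⟩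
  loopless := ⟨fun _ h => by omega⟩

namespace LadderVertex

instance : Countable LadderVertex.{u} :=
  Function.Injective.countable (f := fun p : LadderVertex => (p.level, p.index)) fun _ _ h =>
    LadderVertex.ext (congrArg Prod.fst h) (congrArg Prod.snd h)

/-- The set of vertices of the `n`-th layer. -/
def layer (n : ℕ) : Set LadderVertex.{u} := {p | p.level = n}

/-- The vertex of index `0` in the `n`-th layer, which may be joined to a vertex outside of the
ladder. -/
def port (n : ℕ) : LadderVertex.{u} := ⟨n, 0, (one_lt_layerSize n).pos⟩

theorem eq_port_level {p : LadderVertex.{u}} (hp : p.index = 0) : p = port p.level :=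
  LadderVertex.ext rfl hp

theorem layer_eq_range (n : ℕ) :
    layer.{u} n = Set.range fun i : Fin (layerSize n) => ⟨n, i, i.2⟩ := by
  ext p
  constructor
  · rintro rfl
    exact ⟨⟨p.index, p.index_lt⟩, rfl⟩
  · rintro ⟨i, rfl⟩
    rfl

theorem finite_layer (n : ℕ) : (layer.{u} n).Finite :=
  layer_eq_range n ▸ Set.finite_range _

theorem ncard_layer (n : ℕ) : (layer.{u} n).ncard = layerSize n := by
  rw [layer_eq_range, ← Set.image_univ, Set.ncard_image_of_injective _ fun i j h => ?_,
    Set.ncard_univ, Nat.card_fin]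
  exact Fin.ext (congrArg index h)

theorem ncard_layer_sdiff_port (n : ℕ) :
    (layer.{u} n \ {port n}).ncard = layerSize n - 1 := by
  rw [Set.ncard_sdiff_singleton_of_mem (show port n ∈ layer n from rfl), ncard_layer]

theorem finite_neighborSet (p : LadderVertex.{u}) : (ladder.neighborSet p).Finite := by
  refine ((finite_layer (p.level + 1)).union (finite_layer (p.level - 1))).subset ?_
  rintro q (hq | hq)
  · exact .inl hq
  · exact .inr (Nat.eq_sub_of_add_eq hq)

theorem ncard_neighborSet_add_five (p : LadderVertex.{u}) :
    (ladder.neighborSet p).ncard + 5 = 2 * layerSize (p.level + 1) := by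
  obtain ⟨_ | n, i, hi⟩ := p
  · have hlayer : ladder.neighborSet ⟨0, i, hi⟩ = layer.{u} 1 := by
      ext q
      simp [ladder, layer]
    rw [hlayer, ncard_layer]
    norm_num [layerSize]
  · have hlayers : ladder.neighborSet ⟨n + 1, i, hi⟩ = layer.{u} (n + 2) ∪ layer n := by
      ext q
      simp [ladder, layer]
    have hdisj : Disjoint (layer.{u} (n + 2)) (layer n) :=
      Set.disjoint_left.2 fun q (hq : q.level = n + 2) (hq' : q.level = n) => by omega
    rw [hlayers, Set.ncard_union_eq hdisj (finite_layer _) (finite_layer _), ncard_layer,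
      ncard_layer]
    unfold layerSize
    dsimp only
    omega

theorem odd_ncard_neighborSet (p : LadderVertex.{u}) : Odd (ladder.neighborSet p).ncard := by
  have := ncard_neighborSet_add_five p
  rw [Nat.odd_iff]
  omega

section Rigidity

variable {V : Type*} {G : SimpleGraph V} {R : V → LadderVertex.{u} → Prop}
  {σ : V ⊕ LadderVertex.{u} → Fin 2}

theorem finite_neighborSet_glue (hsub : ∀ p, {x | R x p}.Subsingleton) (p : LadderVertex.{u}) :
    ((glue G ladder R).neighborSet (.inr p)).Finite := by
  rw [neighborSet_glue_inr]
  exact ((finite_neighborSet p).image _).union ((hsub p).finite.image _)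

theorem ncard_neighborSet_glue_lt (hsub : ∀ p, {x | R x p}.Subsingleton) (p : LadderVertex.{u}) :
    ((glue G ladder R).neighborSet (.inr p)).ncard < 2 * (layerSize (p.level + 1) - 1) := by
  have hladder : (Sum.inr '' ladder.neighborSet p : Set (V ⊕ LadderVertex)).ncard + 5 =
      2 * layerSize (p.level + 1) := by
    rw [Set.ncard_image_of_injective _ Sum.inr_injective, ncard_neighborSet_add_five]
  have hR : (Sum.inl '' {x | R x p} : Set (V ⊕ LadderVertex)).ncard ≤ 1 :=
    (Set.ncard_le_one ((hsub p).finite.image _)).2 fun _ hx _ hy => (hsub p).image _ hx hy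
  have hunion := Set.ncard_union_le (Sum.inr '' ladder.neighborSet p) (Sum.inl '' {x | R x p})
  rw [neighborSet_glue_inr]
  omega

theorem eq_of_level_eq_of_index_ne_zero (hport : ∀ x p, R x p → p.index = 0)
    (h : UnfriendlyPartition (glue G ladder R) σ) {p q : LadderVertex.{u}}
    (hp : p.index ≠ 0) (hq : q.index ≠ 0) (hpq : q.level = p.level) :
    σ (.inr q) = σ (.inr p) := by
  have hnbhd {r : LadderVertex.{u}} (hr : r.index ≠ 0) :
      (glue G ladder R).neighborSet (.inr r) = .inr '' ladder.neighborSet r := by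
    have : {x | R x r} = ∅ := Set.eq_empty_of_forall_notMem fun x hx => hr (hport x r hx)
    rw [neighborSet_glue_inr, this, Set.image_empty, Set.union_empty]
  have htwin : ladder.neighborSet q = ladder.neighborSet p := by
    ext r
    simp only [ladder, SimpleGraph.mem_neighborSet, hpq]
  refine h.eq_of_neighborSet_eq ?_ ?_ ?_
  · rw [hnbhd hp]
    exact (finite_neighborSet p).image _
  · rw [hnbhd hp, Set.ncard_image_of_injective _ Sum.inr_injective]
    exact odd_ncard_neighborSet p
  · rw [hnbhd hp, hnbhd hq, htwin]

theorem ne_of_level_eq_succ_of_index_ne_zero (hport : ∀ x p, R x p → p.index = 0)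
    (hsub : ∀ p, {x | R x p}.Subsingleton) (h : UnfriendlyPartition (glue G ladder R) σ)
    {p q : LadderVertex.{u}} (hq : q.index ≠ 0) (hpq : q.level = p.level + 1) :
    σ (.inr p) ≠ σ (.inr q) := by
  refine h.ne_of_ncard_lt_two_mul (S := .inr '' (layer (p.level + 1) \ {port (p.level + 1)}))
    (finite_neighborSet_glue hsub p) ?_ ?_ ?_
  · rintro _ ⟨r, ⟨hr, -⟩, rfl⟩
    exact Or.inl hr
  · rintro _ ⟨r, ⟨hr, hr_ne⟩, rfl⟩
    have hr_index : r.index ≠ 0 := fun hr0 => hr_ne (hr ▸ eq_port_level hr0)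
    exact eq_of_level_eq_of_index_ne_zero hport h hq hr_index (hr.trans hpq.symm)
  · rw [Set.ncard_image_of_injective _ Sum.inr_injective, ncard_layer_sdiff_port]
    exact ncard_neighborSet_glue_lt hsub p

theorem ne_of_level_eq_succ (hport : ∀ x p, R x p → p.index = 0)
    (hsub : ∀ p, {x | R x p}.Subsingleton) (h : UnfriendlyPartition (glue G ladder R) σ)
    {p q : LadderVertex.{u}} (hpq : q.level = p.level + 1) : σ (.inr p) ≠ σ (.inr q) := by
  let core (n : ℕ) : LadderVertex.{u} := ⟨n, 1, one_lt_layerSize n⟩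
  have hne {r : LadderVertex.{u}} (n : ℕ) (hr : n = r.level + 1) : σ (.inr r) ≠ σ (.inr (core n)) :=
    ne_of_level_eq_succ_of_index_ne_zero hport hsub h one_ne_zero hr
  have hq : σ (.inr q) = σ (.inr (core q.level)) :=
    fin_two_eq_of_ne_of_ne (hne (q.level + 1) rfl) (hne (q.level + 1) rfl)
  exact hq ▸ hne q.level hpq

theorem color_sub_color_port_zero (hport : ∀ x p, R x p → p.index = 0)
    (hsub : ∀ p, {x | R x p}.Subsingleton) (h : UnfriendlyPartition (glue G ladder R) σ)
    (p : LadderVertex.{u}) : σ (.inr p) - σ (.inr (port 0)) = Fin.ofNat 2 p.level := by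
  obtain ⟨n, hn⟩ : ∃ n, p.level = n := ⟨_, rfl⟩
  induction n generalizing p with
  | zero =>
    have hp : σ (.inr p) = σ (.inr (port 0)) :=
      fin_two_eq_of_ne_of_ne (c := σ (.inr (port 1))) (ne_of_level_eq_succ hport hsub h (hn ▸ rfl))
        (ne_of_level_eq_succ hport hsub h rfl)
    rw [hp, sub_self, hn]
    rfl
  | succ n ih =>
    have hne : σ (.inr (port n)) ≠ σ (.inr p) := ne_of_level_eq_succ hport hsub h hn
    rw [fin_two_eq_add_one_of_ne hne, add_sub_right_comm, ih (port n) rfl, hn]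
    exact Fin.ext (by simp [port, Fin.val_add])

end Rigidity

end LadderVertex

open LadderVertex in
theorem exists_attachment_mk_eq {V : Type u} [Countable V] (m : V → Fin 2 → Cardinal.{u})
    (hm : ∀ x c, m x c ≤ ℵ₀) :
    ∃ R : V → LadderVertex.{u} → Prop,
      (∀ x p, R x p → p.index = 0) ∧ (∀ p, {x | R x p}.Subsingleton) ∧
        ∀ x c, #{p // R x p ∧ Fin.ofNat 2 p.level = c} = m x c := by
  have (x : V) (c : Fin 2) : Countable (m x c).out := by
    rw [← mk_le_aleph0_iff, mk_out]
    exact hm x c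
  obtain ⟨e, he⟩ := exists_injective_nat (Σ x c, (m x c).out)
  let slot (x : V) (c : Fin 2) (a : (m x c).out) : LadderVertex.{u} := port (2 * e ⟨x, c, a⟩ + c)
  have hinj {x y : V} {c d : Fin 2} {a : (m x c).out} {b : (m y d).out}
      (hab : slot x c a = slot y d b) :
      (⟨x, c, a⟩ : Σ x c, (m x c).out) = ⟨y, d, b⟩ := by
    have : 2 * e ⟨x, c, a⟩ + c = 2 * e ⟨y, d, b⟩ + d := congrArg level hab
    exact he (by omega)
  have hcolor {x : V} {c : Fin 2} (a : (m x c).out) : Fin.ofNat 2 (slot x c a).level = c := by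
    ext
    simp [slot, port, Nat.mod_eq_of_lt c.2]
  refine ⟨fun x p => ∃ c a, slot x c a = p, ?_, ?_, fun x c => ?_⟩
  · rintro x _ ⟨c, a, rfl⟩
    rfl
  · rintro p x ⟨c, a, rfl⟩ y ⟨d, b, hb⟩
    exact congrArg Sigma.fst (hinj hb.symm)
  · have hrange : {p | (∃ c a, slot x c a = p) ∧ Fin.ofNat 2 p.level = c} =
        Set.range (slot x c) := by
      ext p
      constructor
      · rintro ⟨⟨d, a, rfl⟩, hd⟩
        obtain rfl := (hcolor a).symm.trans hd
        exact ⟨a, rfl⟩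
      · rintro ⟨a, rfl⟩
        exact ⟨⟨c, a, rfl⟩, hcolor a⟩
    calc
      _ = #(Set.range (slot x c)) := congrArg (fun s : Set LadderVertex => #s) hrange
      _ = #(m x c).out := mk_range_eq _ fun a b hab => by simpa using hinj hab
      _ = m x c := mk_out _

theorem stmt9_general {V : Type u} [Countable V] (G : SimpleGraph V)
    (C : V → Cardinal.{u} × Cardinal.{u}) (hC : ∀ x, (C x).1 ≤ ℵ₀ ∧ (C x).2 ≤ ℵ₀) :
    ∃ (W : Type u) (_ : Countable W) (H : SimpleGraph W),
      (calI G = ∅ → calI H = ∅) ∧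
      ((∃ σ : W → Fin 2, UnfriendlyPartition H σ) →
        ∃ π : V → Fin 2, CondUnfriendly G C π) := by
  obtain ⟨R, hport, hsub, hcard⟩ := exists_attachment_mk_eq (fun x => ![(C x).1, (C x).2])
    (fun x => Fin.forall_fin_two.2 (hC x))
  refine ⟨V ⊕ LadderVertex.{u}, inferInstance, glue G ladder R, fun hG => ?_, ?_⟩
  · have hsubset := calI_glue_subset (LadderVertex.finite_neighborSet_glue (G := G) hsub)
    rwa [hG, Set.image_empty, Set.subset_empty_iff] at hsubset
  · rintro ⟨σ, h⟩
    have hcond := (h.sub_const (σ (.inr (LadderVertex.port 0)))).condUnfriendly_comp_inl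
    simp only [LadderVertex.color_sub_color_port_zero hport hsub h, hcard, Matrix.cons_val_zero,
      Matrix.cons_val_one, Prod.mk.eta] at hcond
    exact ⟨_, hcond⟩

theorem stmt9 {V : Type u} [Countable V] (G : SimpleGraph V) (C : V → ℕ × ℕ)
    (hC : ∀ x : V, (G.neighborSet x).Infinite → C x = (0, 0)) :
    ∃ (W : Type u) (_ : Countable W) (H : SimpleGraph W),
      (calI G = ∅ → calI H = ∅) ∧
      ((∃ σ : W → Fin 2, UnfriendlyPartition H σ) →
        ∃ π : V → Fin 2,
          CondUnfriendly G (fun x => (((C x).1 : Cardinal.{u}), ((C x).2 : Cardinal.{u}))) π) :=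
  stmt9_general G _ fun _ => ⟨natCast_le_aleph0, natCast_le_aleph0⟩
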